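/- arXiv:0906.2160 — 3 statements merged into one kernel-verified Lean document; each statement's English description precedes it below -/
import Mathlib

section
/- Let (M,d) be a complete cone metric space over a real Banach space E with cone P (with nonempty interior), and let T, S : M → M be maps such that T is continuous and injective. Suppose S is of class D_T(a,b) with constants a, b ≥ 0 satisfying a + 2b < 1. Then for every x₀ ∈ M the sequence (T S^n x₀)_{n≥0} is a Cauchy sequence in (M,d); that is, for every c ∈ E with 0 ≪ c there exists N ∈ ℕ such that d(T S^m x₀, T S^n x₀) ≪ c for all m, n ≥ N. (This is the precise meaning of lim_{m,n→∞} d(T S^m x₀, T S^n x₀) = 0.) -/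
open Filter

section ConeMetricDefs

variable {E : Type*} [NormedAddCommGroup E] [NormedSpace ℝ E]

/-- `P` is a cone in the real Banach space `E`. -/
def IsCone (P : Set E) : Prop :=
  P.Nonempty ∧ IsClosed P ∧ P ≠ {0} ∧
    (∀ a b : ℝ, 0 ≤ a → 0 ≤ b → ∀ x y : E, x ∈ P → y ∈ P → a • x + b • y ∈ P) ∧
    (∀ x : E, x ∈ P → -x ∈ P → x = 0)

/-- `x ≤ y` with respect to the cone `P`, i.e. `y - x ∈ P`. -/
def ConeLe (P : Set E) (x y : E) : Prop := y - x ∈ P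

/-- `x ≪ y` with respect to the cone `P`, i.e. `y - x ∈ interior P`. -/
def ConeLt (P : Set E) (x y : E) : Prop := y - x ∈ interior P

/-- `d` is a cone metric on `M` with respect to the cone `P ⊆ E`. -/
def IsConeMetric (P : Set E) {M : Type*} (d : M → M → E) : Prop :=
  (∀ x y : M, ConeLe P 0 (d x y)) ∧
  (∀ x y : M, d x y = 0 ↔ x = y) ∧
  (∀ x y : M, d x y = d y x) ∧
  (∀ x y z : M, ConeLe P (d x y) (d x z + d z y))

/-- The sequence `x` converges to `l` in the cone metric space `(M, d)`. -/
def ConeSeqTendsto (P : Set E) {M : Type*} (d : M → M → E) (x : ℕ → M) (l : M) : Prop :=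
  ∀ c : E, ConeLt P 0 c → ∃ N : ℕ, ∀ n ≥ N, ConeLt P (d (x n) l) c

/-- The sequence `x` is a Cauchy sequence in the cone metric space `(M, d)`. -/
def ConeSeqCauchy (P : Set E) {M : Type*} (d : M → M → E) (x : ℕ → M) : Prop :=
  ∀ c : E, ConeLt P 0 c → ∃ N : ℕ, ∀ m ≥ N, ∀ n ≥ N, ConeLt P (d (x m) (x n)) c

/-- The cone metric space `(M, d)` is complete. -/
def ConeComplete (P : Set E) {M : Type*} (d : M → M → E) : Prop :=
  ∀ x : ℕ → M, ConeSeqCauchy P d x → ∃ l, ConeSeqTendsto P d x l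

/-- `T : M → M` is (sequentially) continuous on the cone metric space `(M, d)`. -/
def ConeContinuous (P : Set E) {M : Type*} (d : M → M → E) (T : M → M) : Prop :=
  ∀ (x : ℕ → M) (l : M), ConeSeqTendsto P d x l →
    ConeSeqTendsto P d (fun n => T (x n)) (T l)

/-- `T : M → M` is subsequentially convergent: whenever `(T yₙ)` converges,
`(yₙ)` has a convergent subsequence. -/
def ConeSubseqConvergent (P : Set E) {M : Type*} (d : M → M → E) (T : M → M) : Prop :=
  ∀ y : ℕ → M, (∃ l, ConeSeqTendsto P d (fun n => T (y n)) l) →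
    ∃ φ : ℕ → ℕ, StrictMono φ ∧ ∃ l, ConeSeqTendsto P d (fun n => y (φ n)) l

/-- `T : M → M` is sequentially convergent: whenever `(T yₙ)` converges,
`(yₙ)` converges. -/
def ConeSeqConvergent (P : Set E) {M : Type*} (d : M → M → E) (T : M → M) : Prop :=
  ∀ y : ℕ → M, (∃ l, ConeSeqTendsto P d (fun n => T (y n)) l) →
    ∃ l, ConeSeqTendsto P d y l

/-- `S` is of class `D_T(a, b)`:
`d(TSx, TSy) ≤ a • d(Tx, Ty) + b • (d(Tx, TSx) + d(Ty, TSy))` for all `x, y`. -/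
def IsClassDT (P : Set E) {M : Type*} (d : M → M → E) (T S : M → M) (a b : ℝ) : Prop :=
  ∀ x y : M, ConeLe P (d (T (S x)) (T (S y)))
    (a • d (T x) (T y) + b • (d (T x) (T (S x)) + d (T y) (T (S y))))

end ConeMetricDefs

/-!
Put `k = (a + b) / (1 - b)`, which lies in `[0, 1)` because `a + 2b < 1`. Applying the class
condition to `x` and `S x` and absorbing the term `b • d(TSx, TS²x)` on the left gives
`d(TSx, TS²x) ≤ k • d(Tx, TSx)`, so consecutive terms of `(T Sⁿ x₀)` satisfy
`d(T Sⁿ x₀, T Sⁿ⁺¹ x₀) ≤ kⁿ • v` for the fixed vector `v = d(T x₀, T S x₀)`. By the triangle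
inequality `d(T Sᵐ x₀, T Sⁿ x₀)`, for `m ≤ n`, is at most a multiple of `v` by the tail of a
convergent real series. These multiples tend to `0` in norm, hence are eventually `≪ c` whenever
`0 ≪ c`, since the interior of the cone is open.
-/

theorem ConeLt.eventually_of_tendsto_zero {E : Type*} [NormedAddCommGroup E] {P : Set E} {c : E}
    (hc : ConeLt P 0 c) {ι : Type*} {l : Filter ι} {f : ι → E} (hf : Tendsto f l (nhds 0)) :
    ∀ᶠ i in l, ConeLt P (f i) c := by
  have hlim : Tendsto (fun i => c - f i) l (nhds (c - 0)) := hf.const_sub c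
  exact hlim.eventually (isOpen_interior.mem_nhds hc)

section Cone

variable {E : Type*} [NormedAddCommGroup E] [NormedSpace ℝ E]

theorem IsCone.exists_pointedCone_coe_eq {P : Set E} (hP : IsCone P) :
    ∃ C : PointedCone ℝ E, (C : Set E) = P := by
  obtain ⟨⟨p, hp⟩, -, -, hcomb, -⟩ := hP
  let C : PointedCone ℝ E :=
    { carrier := P
      zero_mem' := by simpa using hcomb 0 0 le_rfl le_rfl p p hp hp
      add_mem' := fun {x y} hx hy => by simpa using hcomb 1 1 zero_le_one zero_le_one x y hx hy
      smul_mem' := fun t x hx => by simpa using hcomb t 0 t.2 le_rfl x x hx hx }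
  exact ⟨C, rfl⟩

variable {C : PointedCone ℝ E} {u v x y z : E} {r s : ℝ}

namespace ConeLe

theorem refl (C : PointedCone ℝ E) (x : E) : ConeLe (C : Set E) x x := by
  simp [ConeLe]

theorem trans (hxy : ConeLe (C : Set E) x y) (hyz : ConeLe (C : Set E) y z) :
    ConeLe (C : Set E) x z := by
  simpa [ConeLe] using C.add_mem hyz hxy

theorem add (huv : ConeLe (C : Set E) u v) (hxy : ConeLe (C : Set E) x y) :
    ConeLe (C : Set E) (u + x) (v + y) := by
  simpa [ConeLe, add_sub_add_comm] using C.add_mem huv hxy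

theorem sum {ι : Type*} {t : Finset ι} {f g : ι → E}
    (h : ∀ i ∈ t, ConeLe (C : Set E) (f i) (g i)) :
    ConeLe (C : Set E) (∑ i ∈ t, f i) (∑ i ∈ t, g i) := by
  simpa [ConeLe] using C.sum_mem h

theorem smul (hr : 0 ≤ r) (hxy : ConeLe (C : Set E) x y) :
    ConeLe (C : Set E) (r • x) (r • y) := by
  simpa [ConeLe, smul_sub] using C.smul_mem hr hxy

theorem smul_of_le (hv : ConeLe (C : Set E) 0 v) (hrs : r ≤ s) :
    ConeLe (C : Set E) (r • v) (s • v) := by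
  simpa [ConeLe, sub_smul] using C.smul_mem (sub_nonneg.2 hrs) hv

open scoped Pointwise in
theorem trans_coneLt (hxy : ConeLe (C : Set E) x y) (hyz : ConeLt (C : Set E) y z) :
    ConeLt (C : Set E) x z := by
  have hmem : (z - y) + (y - x) ∈ interior ((C : Set E) + (C : Set E)) :=
    subset_interior_add_left (Set.add_mem_add hyz hxy)
  have hadd : (C : Set E) + (C : Set E) ⊆ C := Set.add_subset_iff.2 fun _ hu _ hv => C.add_mem hu hv
  simpa [ConeLt] using interior_mono hadd hmem

theorem pow_smul_of_succ {f : ℕ → E} {k : ℝ} (hk : 0 ≤ k)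
    (hf : ∀ n, ConeLe (C : Set E) (f (n + 1)) (k • f n)) (n : ℕ) :
    ConeLe (C : Set E) (f n) (k ^ n • f 0) := by
  induction n with
  | zero => simpa using refl C (f 0)
  | succ n ih => simpa [pow_succ', mul_smul] using (hf n).trans (ih.smul hk)

end ConeLe

end Cone

section ConeMetric

variable {E : Type*} [NormedAddCommGroup E] [NormedSpace ℝ E] {C : PointedCone ℝ E}
  {M : Type*} {d : M → M → E}

namespace IsConeMetric

theorem coneLe_sum_Ico (hd : IsConeMetric (C : Set E) d) (y : ℕ → M) {m n : ℕ} (hmn : m ≤ n) :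
    ConeLe (C : Set E) (d (y m) (y n)) (∑ i ∈ Finset.Ico m n, d (y i) (y (i + 1))) := by
  obtain ⟨-, hzero, -, htriangle⟩ := hd
  induction n, hmn using Nat.le_induction with
  | base => simpa [(hzero (y m) (y m)).2 rfl] using ConeLe.refl C 0
  | succ n hmn ih =>
    rw [Finset.sum_Ico_succ_top hmn]
    exact (htriangle _ _ (y n)).trans (ih.add (.refl C _))

theorem coneSeqCauchy_of_coneLe_tendsto_zero (hd : IsConeMetric (C : Set E) d) {y : ℕ → M}
    {f : ℕ → E} (hf : Tendsto f atTop (nhds 0))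
    (hy : ∀ m n, m ≤ n → ConeLe (C : Set E) (d (y m) (y n)) (f m)) :
    ConeSeqCauchy (C : Set E) d y := by
  intro c hc
  obtain ⟨-, -, hsymm, -⟩ := hd
  obtain ⟨N, hN⟩ := eventually_atTop.1 (hc.eventually_of_tendsto_zero hf)
  refine ⟨N, fun m hm n hn => ?_⟩
  rcases le_total m n with hmn | hnm
  · exact (hy m n hmn).trans_coneLt (hN m hm)
  · rw [hsymm]
    exact (hy n m hnm).trans_coneLt (hN n hn)

theorem coneSeqCauchy_of_coneLe_smul_of_summable (hd : IsConeMetric (C : Set E) d) {y : ℕ → M}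
    {v : E} (hv : ConeLe (C : Set E) 0 v) {r : ℕ → ℝ} (hr₀ : ∀ n, 0 ≤ r n) (hr : Summable r)
    (hy : ∀ n, ConeLe (C : Set E) (d (y n) (y (n + 1))) (r n • v)) :
    ConeSeqCauchy (C : Set E) d y := by
  have htail : Tendsto (fun m => (∑' i, r (i + m)) • v) atTop (nhds 0) := by
    simpa using (tendsto_sum_nat_add r).smul_const v
  refine hd.coneSeqCauchy_of_coneLe_tendsto_zero htail fun m n hmn => ?_
  have hsum_le_tail : ∑ i ∈ Finset.Ico m n, r i ≤ ∑' i, r (i + m) := by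
    simp only [Finset.sum_Ico_eq_sum_range, add_comm m]
    exact ((summable_nat_add_iff m).2 hr).sum_le_tsum _ fun i _ => hr₀ (i + m)
  have hsteps : ConeLe (C : Set E) (d (y m) (y n)) ((∑ i ∈ Finset.Ico m n, r i) • v) := by
    rw [Finset.sum_smul]
    exact (hd.coneLe_sum_Ico y hmn).trans (.sum fun i _ => hy i)
  exact hsteps.trans (hv.smul_of_le hsum_le_tail)

end IsConeMetric

namespace IsClassDT

variable {T S : M → M} {a b : ℝ}

theorem coneLe_div_smul (hS : IsClassDT (C : Set E) d T S a b) (hb : b < 1) (x : M) :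
    ConeLe (C : Set E) (d (T (S x)) (T (S (S x)))) (((a + b) / (1 - b)) • d (T x) (T (S x))) := by
  have hb' : 0 < 1 - b := sub_pos.2 hb
  have habsorbed : ConeLe (C : Set E) ((1 - b) • d (T (S x)) (T (S (S x))))
      ((a + b) • d (T x) (T (S x))) := by
    have h := hS x (S x)
    unfold ConeLe at h ⊢
    convert h using 1
    module
  simpa [smul_smul, hb'.ne', div_eq_inv_mul] using habsorbed.smul (inv_nonneg.2 hb'.le)

theorem coneLe_pow_smul (hS : IsClassDT (C : Set E) d T S a b) (hab : 0 ≤ a + b) (hb : b < 1)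
    (x : M) (n : ℕ) :
    ConeLe (C : Set E) (d (T (S^[n] x)) (T (S^[n + 1] x)))
      (((a + b) / (1 - b)) ^ n • d (T x) (T (S x))) := by
  refine ConeLe.pow_smul_of_succ (f := fun n => d (T (S^[n] x)) (T (S^[n + 1] x)))
    (div_nonneg hab (sub_nonneg.2 hb.le)) (fun n => ?_) n
  simpa only [Function.iterate_succ_apply'] using hS.coneLe_div_smul hb (S^[n] x)

end IsClassDT

end ConeMetric

theorem stmt0_general {E : Type*} [NormedAddCommGroup E] [NormedSpace ℝ E] {M : Type*}
    (C : PointedCone ℝ E) (d : M → M → E) (hd : IsConeMetric (C : Set E) d) (T S : M → M)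
    (a b : ℝ) (ha : 0 ≤ a) (hb : 0 ≤ b) (hab : a + 2 * b < 1)
    (hS : IsClassDT (C : Set E) d T S a b) (x₀ : M) :
    ConeSeqCauchy (C : Set E) d (fun n => T (S^[n] x₀)) := by
  have hb₁ : b < 1 := by linarith
  have hk₀ : 0 ≤ (a + b) / (1 - b) := div_nonneg (add_nonneg ha hb) (sub_nonneg.2 hb₁.le)
  have hk₁ : (a + b) / (1 - b) < 1 := (div_lt_one (sub_pos.2 hb₁)).2 (by linarith)
  exact hd.coneSeqCauchy_of_coneLe_smul_of_summable (hd.1 (T x₀) (T (S x₀)))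
    (fun n => pow_nonneg hk₀ n) (summable_geometric_of_lt_one hk₀ hk₁)
    (hS.coneLe_pow_smul (add_nonneg ha hb) hb₁ x₀)

/-- if `S ∈ D_T(a,b)` with `a + 2b < 1`, then for every `x₀` the
sequence `(T S^n x₀)` is Cauchy in the complete cone metric space `(M, d)`. -/
theorem stmt0 {E : Type*} [NormedAddCommGroup E] [NormedSpace ℝ E] [CompleteSpace E]
    {M : Type*} (P : Set E) (hP : IsCone P) (hPint : (interior P).Nonempty)
    (d : M → M → E) (hd : IsConeMetric P d) (hcomplete : ConeComplete P d)
    (T S : M → M) (hTcont : ConeContinuous P d T) (hTinj : Function.Injective T)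
    (a b : ℝ) (ha : 0 ≤ a) (hb : 0 ≤ b) (hab : a + 2 * b < 1)
    (hS : IsClassDT P d T S a b) (x₀ : M) :
    ConeSeqCauchy P d (fun n => T (S^[n] x₀)) := by
  obtain ⟨C, rfl⟩ := hP.exists_pointedCone_coe_eq
  exact stmt0_general C d hd T S a b ha hb hab hS x₀
end

section
/- Let (M,d) be a cone metric space over a real Banach space E with cone P (with nonempty interior), and let T, S : M → M be maps such that T is continuous and injective. Suppose S is of class D_T(a,b) with constants a, b ≥ 0 and b < 1. If (x_n) is a sequence in M converging to a point p with S p = p, then d(T x_n, T S x_n) → 0, in the sense that for every c ∈ E with 0 ≪ c there exists N such that d(T x_n, T S x_n) ≪ c for all n ≥ N. -/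
open Filter

/-
The triangle inequality through `T p` and the `D_T(a, b)` inequality at `(x, p)` combine to
`d(Tx, TSx) ≤ d(Tx, Tp) + a • d(Tx, Tp) + b • d(Tx, TSx)`, that is,
`(1 - b) • d(Tx, TSx) ≤ (1 + a) • d(Tx, Tp)`. Since `1 - b` is positive, the left-hand distance
becomes small, in the sense of `≪`, along with the right-hand one.
-/

section ConvexConeInterior

open scoped Pointwise

variable {𝕜 E : Type*} [DivisionRing 𝕜] [PartialOrder 𝕜] [AddCommGroup E] [Module 𝕜 E]
  [TopologicalSpace E] {C : ConvexCone 𝕜 E} {x y : E}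

theorem add_mem_interior_convexCone [ContinuousAdd E] (hx : x ∈ interior (C : Set E))
    (hy : y ∈ C) : x + y ∈ interior (C : Set E) := by
  have hadd : (C : Set E) + C ⊆ C := Set.add_subset_iff.2 fun _ hu _ hv => C.add_mem hu hv
  exact interior_mono hadd (subset_interior_add_left (Set.add_mem_add hx hy))

theorem smul_mem_interior_convexCone [ContinuousConstSMul 𝕜 E] {k : 𝕜} (hk : 0 < k)
    (hx : x ∈ interior (C : Set E)) : k • x ∈ interior (C : Set E) := by
  have hsmul : k • (C : Set E) ⊆ C := Set.smul_set_subset_iff.2 fun _ hu => C.smul_mem hk hu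
  apply interior_mono hsmul
  rw [interior_smul₀ hk.ne']
  exact Set.smul_mem_smul_set hx

end ConvexConeInterior

section ConeOrder

variable {E : Type*} [NormedAddCommGroup E] [NormedSpace ℝ E]

/-- The cone `P` as a bundled `ConvexCone`, retaining only its stability under addition and under
multiplication by positive scalars. -/
def IsCone.toConvexCone {P : Set E} (hP : IsCone P) : ConvexCone ℝ E where
  carrier := P
  smul_mem' k hk x hx := by simpa using hP.2.2.2.1 k 0 hk.le le_rfl x x hx hx
  add_mem' x hx y hy := by simpa using hP.2.2.2.1 1 1 zero_le_one zero_le_one x y hx hy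

variable {C : ConvexCone ℝ E} {x y z : E} {k : ℝ}

theorem ConeLe.smul_s4 (hk : 0 < k) (h : ConeLe C x y) : ConeLe C (k • x) (k • y) := by
  simpa only [ConeLe, smul_sub, SetLike.mem_coe] using C.smul_mem hk h

theorem ConeLt.smul_s4 (hk : 0 < k) (h : ConeLt C x y) : ConeLt C (k • x) (k • y) := by
  simpa only [ConeLt, smul_sub] using smul_mem_interior_convexCone hk h

theorem ConeLe.trans_coneLt_s4 (hxy : ConeLe C x y) (hyz : ConeLt C y z) : ConeLt C x z := by
  simpa only [ConeLt, sub_add_sub_cancel] using add_mem_interior_convexCone hyz hxy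

end ConeOrder

section CSequence

variable {E : Type*} [NormedAddCommGroup E] [NormedSpace ℝ E]

/-- `u` is a *c-sequence*: it is eventually `≪ c` for every `c ≫ 0`. This is the notion of
smallness behind convergence in a cone metric space: `ConeSeqTendsto P d x l` unfolds to
`IsCSequence P fun n => d (x n) l`. No lower bound on `u` is imposed. -/
def IsCSequence (P : Set E) (u : ℕ → E) : Prop :=
  ∀ c : E, ConeLt P 0 c → ∃ N : ℕ, ∀ n ≥ N, ConeLt P (u n) c

variable {C : ConvexCone ℝ E} {u v : ℕ → E} {k : ℝ}

theorem IsCSequence.of_le (hv : IsCSequence C v) (huv : ∀ n, ConeLe C (u n) (v n)) :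
    IsCSequence C u := fun c hc =>
  (hv c hc).imp fun _ hN n hn => (huv n).trans_coneLt_s4 (hN n hn)

theorem IsCSequence.smul_s4 (hk : 0 < k) (hu : IsCSequence C u) :
    IsCSequence C fun n => k • u n := by
  intro c hc
  have hc' : ConeLt C 0 (k⁻¹ • c) := by simpa only [smul_zero] using hc.smul_s4 (inv_pos.2 hk)
  obtain ⟨N, hN⟩ := hu _ hc'
  refine ⟨N, fun n hn => ?_⟩
  simpa only [smul_inv_smul₀ hk.ne'] using (hN n hn).smul_s4 hk

end CSequence

section ClassDT

variable {E : Type*} [NormedAddCommGroup E] [NormedSpace ℝ E] {C : ConvexCone ℝ E}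
  {M : Type*} {d : M → M → E} {T S : M → M} {a b : ℝ} {p : M}

theorem IsClassDT.one_sub_smul_le_one_add_smul (hd : IsConeMetric C d)
    (hS : IsClassDT C d T S a b) (hp : S p = p) (x : M) :
    ConeLe C ((1 - b) • d (T x) (T (S x))) ((1 + a) • d (T x) (T p)) := by
  obtain ⟨-, hzero, hsymm, htri⟩ := hd
  have hTp : d (T p) (T p) = 0 := (hzero _ _).2 rfl
  have htriangle : ConeLe C (d (T x) (T (S x))) (d (T x) (T p) + d (T (S x)) (T p)) := by
    simpa only [hsymm (T p)] using htri (T x) (T (S x)) (T p)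
  have hclass : ConeLe C (d (T (S x)) (T p))
      (a • d (T x) (T p) + b • d (T x) (T (S x))) := by
    simpa only [hp, hTp, add_zero] using hS x p
  have hsum := C.add_mem htriangle hclass
  rw [ConeLe, SetLike.mem_coe]
  convert hsum using 1
  module

theorem stmt4_general (hd : IsConeMetric C d) (ha : 0 ≤ a) (hb1 : b < 1)
    (hS : IsClassDT C d T S a b) (hp : S p = p) {x : ℕ → M}
    (hTx : ConeSeqTendsto C d (fun n => T (x n)) (T p)) :
    IsCSequence C fun n => d (T (x n)) (T (S (x n))) := by
  have hb : 0 < 1 - b := sub_pos.2 hb1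
  have hk : 0 < (1 - b)⁻¹ * (1 + a) := by positivity
  have hbound : ∀ n, ConeLe C (d (T (x n)) (T (S (x n))))
      (((1 - b)⁻¹ * (1 + a)) • d (T (x n)) (T p)) := fun n => by
    simpa only [inv_smul_smul₀ hb.ne', smul_smul] using
      (hS.one_sub_smul_le_one_add_smul hd hp (x n)).smul_s4 (inv_pos.2 hb)
  exact (IsCSequence.smul_s4 hk hTx).of_le hbound

end ClassDT

/-- if `S ∈ D_T(a,b)` with `b < 1` and `(xₙ)` converges to a
fixed point `p` of `S`, then `d(T xₙ, T S xₙ) → 0`. -/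
theorem stmt4 {E : Type*} [NormedAddCommGroup E] [NormedSpace ℝ E] [CompleteSpace E]
    {M : Type*} (P : Set E) (hP : IsCone P) (hPint : (interior P).Nonempty)
    (d : M → M → E) (hd : IsConeMetric P d)
    (T S : M → M) (hTcont : ConeContinuous P d T) (hTinj : Function.Injective T)
    (a b : ℝ) (ha : 0 ≤ a) (hb : 0 ≤ b) (hb1 : b < 1)
    (hS : IsClassDT P d T S a b)
    (x : ℕ → M) (p : M) (hp : S p = p) (hx : ConeSeqTendsto P d x p) :
    ∀ c : E, ConeLt P 0 c → ∃ N : ℕ, ∀ n ≥ N, ConeLt P (d (T (x n)) (T (S (x n)))) c :=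
  stmt4_general (C := hP.toConvexCone) hd ha hb1 hS hp (hTcont x p hx)
end

section
/- Let (M,d) be a cone metric space over a real Banach space E with cone P (with nonempty interior), and let T, S : M → M be maps such that T is continuous and injective. Suppose S is of class D_T(a,b) with constants a, b ≥ 0 and b < 1. If (x_n) is a sequence in M converging to a point p ∈ M and d(T x_n, T S x_n) → 0 (i.e., for every c ∈ E with 0 ≪ c there exists N such that d(T x_n, T S x_n) ≪ c for all n ≥ N), then p is a fixed point of S: S p = p. -/
open Filter

/-! For every `n` two triangle inequalities and the `D_T(a, b)` condition at `(xₙ, p)` give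
`(1 - b) d(Tp, TSp) ≤ (1 + a) d(Txₙ, Tp) + (1 + b) d(Txₙ, TSxₙ)`. The right-hand side is eventually
`≪ c` for every `c ≫ 0`, and a fixed vector below all `t • c` with `t > 0` is `≤ 0` because the cone
is closed. Hence `d(Tp, TSp) = 0`. -/

section ConeOrder

open scoped Pointwise Topology

variable {E : Type*} [NormedAddCommGroup E] {P : Set E}

theorem coneLe_zero_left {x : E} : ConeLe P 0 x ↔ x ∈ P := by
  rw [ConeLe, sub_zero]

theorem coneLt_zero_left {x : E} : ConeLt P 0 x ↔ x ∈ interior P := by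
  rw [ConeLt, sub_zero]

theorem ConeLt.coneLe {x y : E} (h : ConeLt P x y) : ConeLe P x y :=
  interior_subset h

theorem IsConeMetric.mem_cone {M : Type*} {d : M → M → E} (hd : IsConeMetric P d) (x y : M) :
    d x y ∈ P :=
  coneLe_zero_left.mp (hd.1 x y)

/-- The sequence `u` in `E` tends to `0` in the sense of the cone: it is eventually `≪ c` for every
`c ≫ 0`. No lower bound on `u` is imposed, so this is meaningful for sequences in `P`;
`ConeSeqTendsto P d x l` is by definition `IsConeNull P fun n => d (x n) l`. -/
def IsConeNull (P : Set E) (u : ℕ → E) : Prop :=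
  ∀ c : E, ConeLt P 0 c → ∃ N : ℕ, ∀ n ≥ N, ConeLt P (u n) c

variable [NormedSpace ℝ E]

namespace IsCone

theorem add_mem (hP : IsCone P) {x y : E} (hx : x ∈ P) (hy : y ∈ P) : x + y ∈ P := by
  simpa only [one_smul] using hP.2.2.2.1 1 1 zero_le_one zero_le_one x y hx hy

theorem smul_mem (hP : IsCone P) {t : ℝ} (ht : 0 ≤ t) {x : E} (hx : x ∈ P) : t • x ∈ P := by
  simpa only [zero_smul, add_zero] using hP.2.2.2.1 t 0 ht le_rfl x x hx hx

theorem coneLe_trans (hP : IsCone P) {x y z : E} (hxy : ConeLe P x y) (hyz : ConeLe P y z) :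
    ConeLe P x z := by
  simpa only [ConeLe, sub_add_sub_cancel] using hP.add_mem hyz hxy

theorem coneLe_antisymm (hP : IsCone P) {x y : E} (hxy : ConeLe P x y) (hyx : ConeLe P y x) :
    x = y :=
  (sub_eq_zero.mp (hP.2.2.2.2 (y - x) hxy (by rwa [neg_sub]))).symm

theorem add_mem_interior (hP : IsCone P) {x y : E} (hx : x ∈ interior P) (hy : y ∈ interior P) :
    x + y ∈ interior P := by
  have hPP : P + P ⊆ P := Set.add_subset_iff.mpr fun _ hu _ hv => hP.add_mem hu hv
  exact interior_mono hPP (subset_interior_add (Set.add_mem_add hx hy))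

theorem smul_mem_interior (hP : IsCone P) {t : ℝ} (ht : 0 < t) {x : E} (hx : x ∈ interior P) :
    t • x ∈ interior P := by
  have htP : t • P ⊆ P := Set.smul_set_subset_iff.mpr fun _ hv => hP.smul_mem ht.le hv
  refine interior_mono htP ?_
  rw [interior_smul₀ ht.ne']
  exact Set.smul_mem_smul_set hx

theorem coneLe_zero_of_forall_pos_coneLe_smul (hP : IsCone P) {u c : E}
    (h : ∀ t : ℝ, 0 < t → ConeLe P u (t • c)) : ConeLe P u 0 := by
  have hlim : Tendsto (fun t : ℝ => t • c - u) (𝓝[>] 0) (𝓝 ((0 : ℝ) • c - u)) :=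
    (Continuous.tendsto (by fun_prop) 0).mono_left nhdsWithin_le_nhds
  rw [zero_smul] at hlim
  exact hP.2.1.mem_of_tendsto hlim (eventually_mem_nhdsWithin.mono h)

theorem coneLe_zero_of_smul_coneLe_zero (hP : IsCone P) {t : ℝ} (ht : 0 < t) {u : E}
    (h : ConeLe P (t • u) 0) : ConeLe P u 0 := by
  have hmem := hP.smul_mem (inv_nonneg.mpr ht.le) h
  rwa [smul_sub, smul_zero, inv_smul_smul₀ ht.ne'] at hmem

end IsCone

namespace IsConeNull

theorem add (hP : IsCone P) {u v : ℕ → E} (hu : IsConeNull P u) (hv : IsConeNull P v) :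
    IsConeNull P fun n => u n + v n := by
  intro c hc
  have hhalf : ConeLt P 0 ((2⁻¹ : ℝ) • c) :=
    coneLt_zero_left.mpr (hP.smul_mem_interior (by norm_num) (coneLt_zero_left.mp hc))
  obtain ⟨N₁, hN₁⟩ := hu _ hhalf
  obtain ⟨N₂, hN₂⟩ := hv _ hhalf
  refine ⟨max N₁ N₂, fun n hn => ?_⟩
  have hsplit : c - (u n + v n) = ((2⁻¹ : ℝ) • c - u n) + ((2⁻¹ : ℝ) • c - v n) := by module
  rw [ConeLt, hsplit]
  exact hP.add_mem_interior (hN₁ n (le_of_max_le_left hn)) (hN₂ n (le_of_max_le_right hn))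

theorem const_smul (hP : IsCone P) {u : ℕ → E} (hu : IsConeNull P u) {t : ℝ} (ht : 0 ≤ t) :
    IsConeNull P fun n => t • u n := by
  intro c hc
  rcases ht.eq_or_lt with rfl | htpos
  · exact ⟨0, fun n _ => by simpa only [zero_smul] using hc⟩
  · obtain ⟨N, hN⟩ := hu (t⁻¹ • c)
      (coneLt_zero_left.mpr (hP.smul_mem_interior (inv_pos.mpr htpos) (coneLt_zero_left.mp hc)))
    refine ⟨N, fun n hn => ?_⟩
    have hmem := hP.smul_mem_interior htpos (hN n hn)
    rwa [smul_sub, smul_inv_smul₀ htpos.ne'] at hmem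

theorem coneLe_zero_of_forall_coneLe (hP : IsCone P) (hPint : (interior P).Nonempty) {u : E}
    {v : ℕ → E} (hv : IsConeNull P v) (huv : ∀ n, ConeLe P u (v n)) : ConeLe P u 0 := by
  obtain ⟨c, hc⟩ := hPint
  refine hP.coneLe_zero_of_forall_pos_coneLe_smul (c := c) fun t ht => ?_
  obtain ⟨N, hN⟩ := hv (t • c) (coneLt_zero_left.mpr (hP.smul_mem_interior ht hc))
  exact hP.coneLe_trans (huv N) (hN N le_rfl).coneLe

end IsConeNull

end ConeOrder

section ClassDT

variable {E : Type*} [NormedAddCommGroup E] [NormedSpace ℝ E] {P : Set E}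
  {M : Type*} {d : M → M → E} {T S : M → M} {a b : ℝ}

namespace IsClassDT

theorem mono (hP : IsCone P) (hd : IsConeMetric P d) (hS : IsClassDT P d T S a b) {a' b' : ℝ}
    (ha : a ≤ a') (hb : b ≤ b') : IsClassDT P d T S a' b' := by
  intro x y
  refine hP.coneLe_trans (hS x y) ?_
  have hmem := hP.add_mem (hP.smul_mem (sub_nonneg.mpr ha) (hd.mem_cone (T x) (T y)))
    (hP.smul_mem (sub_nonneg.mpr hb)
      (hP.add_mem (hd.mem_cone (T x) (T (S x))) (hd.mem_cone (T y) (T (S y)))))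
  rw [ConeLe]
  convert hmem using 1
  module

theorem one_sub_smul_coneLe (hP : IsCone P) (hd : IsConeMetric P d)
    (hS : IsClassDT P d T S a b) (y p : M) :
    ConeLe P ((1 - b) • d (T p) (T (S p)))
      ((1 + a) • d (T y) (T p) + (1 + b) • d (T y) (T (S y))) := by
  obtain ⟨-, -, hsymm, htri⟩ := hd
  have hTp : ConeLe P (d (T p) (T (S p))) (d (T y) (T p) + d (T y) (T (S p))) :=
    hsymm (T p) (T y) ▸ htri (T p) (T (S p)) (T y)
  have hTy : ConeLe P (d (T y) (T (S p))) (d (T y) (T (S y)) + d (T (S y)) (T (S p))) :=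
    htri (T y) (T (S p)) (T (S y))
  have hmem := hP.add_mem (hP.add_mem hTp hTy) (hS y p)
  rw [ConeLe]
  convert hmem using 1
  module

end IsClassDT

theorem stmt5_general (hP : IsCone P) (hPint : (interior P).Nonempty) (hd : IsConeMetric P d)
    (hb : b < 1) (hS : IsClassDT P d T S a b) {x : ℕ → M} {p : M}
    (hTx : ConeSeqTendsto P d (fun n => T (x n)) (T p))
    (hTSx : IsConeNull P fun n => d (T (x n)) (T (S (x n)))) : T (S p) = T p := by
  -- Negative `a`, `b` are enlarged to `0` so that the coefficients of the bound are nonnegative.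
  have hS' : IsClassDT P d T S (max a 0) (max b 0) :=
    hS.mono hP hd (le_max_left a 0) (le_max_left b 0)
  have hb' : 0 < 1 - max b 0 := sub_pos.mpr (max_lt hb one_pos)
  have hnull : IsConeNull P fun n =>
      (1 + max a 0) • d (T (x n)) (T p) + (1 + max b 0) • d (T (x n)) (T (S (x n))) :=
    .add hP (.const_smul hP hTx (by positivity)) (.const_smul hP hTSx (by positivity))
  have hle : ConeLe P (d (T p) (T (S p))) 0 :=
    hP.coneLe_zero_of_smul_coneLe_zero hb' <|
      hnull.coneLe_zero_of_forall_coneLe hP hPint fun n => hS'.one_sub_smul_coneLe hP hd (x n) p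
  have hdist : d (T p) (T (S p)) = 0 := hP.coneLe_antisymm hle (hd.1 _ _)
  exact ((hd.2.1 _ _).mp hdist).symm

end ClassDT

/-- if `S ∈ D_T(a,b)` with `b < 1`, `(xₙ)` converges to `p` and
`d(T xₙ, T S xₙ) → 0`, then `p` is a fixed point of `S`. -/
theorem stmt5 {E : Type*} [NormedAddCommGroup E] [NormedSpace ℝ E] [CompleteSpace E]
    {M : Type*} (P : Set E) (hP : IsCone P) (hPint : (interior P).Nonempty)
    (d : M → M → E) (hd : IsConeMetric P d)
    (T S : M → M) (hTcont : ConeContinuous P d T) (hTinj : Function.Injective T)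
    (a b : ℝ) (ha : 0 ≤ a) (hb : 0 ≤ b) (hb1 : b < 1)
    (hS : IsClassDT P d T S a b)
    (x : ℕ → M) (p : M) (hx : ConeSeqTendsto P d x p)
    (hlim : ∀ c : E, ConeLt P 0 c →
      ∃ N : ℕ, ∀ n ≥ N, ConeLt P (d (T (x n)) (T (S (x n)))) c) :
    S p = p := by
  exact hTinj (stmt5_general hP hPint hd hb1 hS (hTcont x p hx) hlim)
end
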